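/- Let F be a 1-expanding CNF formula over V in which every variable occurs, and suppose there is no nonempty set U ⊆ V admitting an autarky on U such that F ∖ F_U is 1-expanding. Let S ⊆ V be a nonempty set with |F_S| = |S| + 1 such that F[S] is unsatisfiable (no assignment of the variables of S satisfies all restricted clauses F i ∩ (literals over S) for i ∈ F_S). Let c' be the clause consisting of all literals (v, b) occurring in some clause F i with i ∈ F_S and v ∉ S, and let F' be obtained from F by deleting all indices in F_S and adding one new index carrying c' (c' may be empty; an empty clause is satisfied by no assignment). Then sat(F) = sat(F') + |S|. -/

import Mathlib

/-!
Clauses outside `F_S` do not see the variables of `S`, so the assignment outside `S` may be fixed;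
it then has to be shown that the best choice on `S` satisfies exactly `|S|` clauses of `F_S`, plus
one if `c'` is satisfied. If all `|S| + 1` clauses of `F_S` are satisfied, one of them is satisfied
by a literal outside `S`, because `F[S]` is unsatisfiable; this literal belongs to `c'`. Conversely,
1-expansion leaves Hall's condition intact after deleting any one clause, so the variables of `S`
can be set to satisfy `|S|` distinct clauses of `F_S` other than a prescribed one; when `c'` is
satisfied, prescribe a clause of `F_S` that contains a true literal outside `S`.
-/

open scoped Classical

/-- A truth assignment `τ` satisfies a clause `c` (a finite set of literals `(v, b)`)
if some literal `(v, b) ∈ c` has `τ v = b`. -/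
def Satisfies {V : Type*} (τ : V → Bool) (c : Finset (V × Bool)) : Prop :=
  ∃ l ∈ c, τ l.1 = l.2

/-- `satCount F τ` is the number of indices whose clause is satisfied by `τ`. -/
noncomputable def satCount {V I : Type*} [Fintype I]
    (F : I → Finset (V × Bool)) (τ : V → Bool) : ℕ :=
  (Finset.univ.filter fun i => Satisfies τ (F i)).card

/-- `satMax F` is the maximum of `satCount F τ` over all assignments `τ`. -/
noncomputable def satMax {V I : Type*} [Fintype V] [Fintype I]
    (F : I → Finset (V × Bool)) : ℕ :=
  Finset.univ.sup fun τ : V → Bool => satCount F τ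

/-- `M` is a matching of the formula `F`: each pair `(v, i) ∈ M` has variable `v`
occurring in clause `F i`, and the pairs have pairwise distinct variables and
pairwise distinct indices. -/
def IsMatching {V I : Type*} (F : I → Finset (V × Bool)) (M : Finset (V × I)) : Prop :=
  (∀ p ∈ M, ∃ b, (p.1, b) ∈ F p.2) ∧
  ∀ p ∈ M, ∀ q ∈ M, p ≠ q → p.1 ≠ q.1 ∧ p.2 ≠ q.2

/-- The matching number `ν(F)`: the largest size of a matching of `F`. -/
noncomputable def matchNum {V I : Type*} [Fintype V] [Fintype I]
    (F : I → Finset (V × Bool)) : ℕ :=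
  (Finset.univ.filter fun M : Finset (V × I) => IsMatching F M).sup Finset.card

section

open Finset

theorem exists_injective_forall_mem_erase_of_card_lt_card_biUnion {ι α : Type*} [DecidableEq α]
    (t : ι → Finset α) (h : ∀ s : Finset ι, s.Nonempty → #s < #(s.biUnion t)) (a : α) :
    ∃ f : ι → α, Function.Injective f ∧ ∀ x, f x ∈ (t x).erase a := by
  refine (all_card_le_biUnion_card_iff_exists_injective fun x => (t x).erase a).1 fun s => ?_
  rcases s.eq_empty_or_nonempty with rfl | hs
  · exact Nat.zero_le _
  · rw [← erase_biUnion]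
    exact (Nat.le_sub_one_of_lt (h s hs)).trans pred_card_le_card_erase

variable {V I : Type*}

theorem satisfies_union {τ : V → Bool} {c d : Finset (V × Bool)} :
    Satisfies τ (c ∪ d) ↔ Satisfies τ c ∨ Satisfies τ d := by
  simp only [Satisfies, mem_union, or_and_right, exists_or]

theorem satisfies_biUnion {τ : V → Bool} {A : Finset I} {F : I → Finset (V × Bool)} :
    Satisfies τ (A.biUnion F) ↔ ∃ i ∈ A, Satisfies τ (F i) := by
  simp only [Satisfies, mem_biUnion]
  grind

theorem satisfies_iff_filter_or_filter_not {τ : V → Bool} {c : Finset (V × Bool)}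
    (p : V × Bool → Prop) [DecidablePred p] [∀ l, Decidable (¬ p l)] :
    Satisfies τ c ↔ Satisfies τ {l ∈ c | p l} ∨ Satisfies τ {l ∈ c | ¬ p l} := by
  rw [← satisfies_union, filter_union_filter_not_eq]

theorem Satisfies.congr {σ τ : V → Bool} {c : Finset (V × Bool)} (hτ : Satisfies τ c)
    (h : ∀ l ∈ c, σ l.1 = τ l.1) : Satisfies σ c := by
  obtain ⟨l, hl, hlτ⟩ := hτ
  exact ⟨l, hl, (h l hl).trans hlτ⟩

theorem satCount_subtype (F : I → Finset (V × Bool)) (τ : V → Bool) {p : I → Prop}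
    [Fintype {i // p i}] {A : Finset I} (hA : ∀ i, i ∈ A ↔ p i) :
    satCount (fun i : {i // p i} => F i) τ = #{i ∈ A | Satisfies τ (F i)} := by
  simp only [satCount, card_filter, sum_subtype A hA]

variable [Fintype I]

theorem satCount_eq_card_add_card_compl (F : I → Finset (V × Bool)) (τ : V → Bool)
    (A : Finset I) :
    satCount F τ = #{i ∈ Aᶜ | Satisfies τ (F i)} + #{i ∈ A | Satisfies τ (F i)} := by
  simp only [satCount, card_filter, sum_compl_add_sum]

theorem satCount_sumElim {J : Type*} [Fintype J] (F : I → Finset (V × Bool))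
    (G : J → Finset (V × Bool)) (τ : V → Bool) :
    satCount (Sum.elim F G) τ = satCount F τ + satCount G τ := by
  simp only [satCount, card_filter, Fintype.sum_sum_type]
  rfl

theorem satCount_le_satMax [Fintype V] (F : I → Finset (V × Bool)) (τ : V → Bool) :
    satCount F τ ≤ satMax F :=
  le_sup (f := satCount F) (mem_univ τ)

theorem exists_satCount_eq_satMax [Fintype V] (F : I → Finset (V × Bool)) :
    ∃ τ, satCount F τ = satMax F := by
  obtain ⟨τ, -, hτ⟩ := exists_mem_eq_sup univ univ_nonempty (satCount F)
  exact ⟨τ, hτ.symm⟩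

/-- The set `F_S` of indices whose clause contains a variable of `S`. -/
noncomputable def meetingIndices (F : I → Finset (V × Bool)) (S : Finset V) : Finset I :=
  {i | ∃ l ∈ F i, l.1 ∈ S}

/-- The clause `c'` of all literals outside `S` in the clauses of `F_S`, by which the reduction
replaces `F_S`. -/
noncomputable def outerClause (F : I → Finset (V × Bool)) (S : Finset V) : Finset (V × Bool) :=
  (meetingIndices F S).biUnion fun i => {l ∈ F i | l.1 ∉ S}

/-- The reduced formula `F'`: the clauses of `F ∖ F_S` together with `outerClause F S`, which is
indexed by the `Unit` summand. -/
noncomputable def contract (F : I → Finset (V × Bool)) (S : Finset V) :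
    {i : I // ¬ ∃ l ∈ F i, l.1 ∈ S} ⊕ Unit → Finset (V × Bool) :=
  Sum.elim (fun i => F i) fun _ => outerClause F S

variable {F : I → Finset (V × Bool)} {S : Finset V}

theorem mem_meetingIndices {i : I} : i ∈ meetingIndices F S ↔ ∃ l ∈ F i, l.1 ∈ S := by
  simp only [meetingIndices, mem_filter_univ]

theorem meetingIndices_eq_biUnion (F : I → Finset (V × Bool)) (S : Finset V) :
    meetingIndices F S = S.biUnion fun v => ({i | ∃ b, (v, b) ∈ F i} : Finset I) := by
  ext i
  simp only [mem_meetingIndices, mem_biUnion, mem_filter_univ, Prod.exists]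
  grind

theorem outerClause_eq_filter [Fintype V] (F : I → Finset (V × Bool)) (S : Finset V) :
    outerClause F S = ({l | l.1 ∉ S ∧ ∃ i, (∃ l' ∈ F i, l'.1 ∈ S) ∧ l ∈ F i} : Finset _) := by
  ext l
  simp only [outerClause, mem_biUnion, mem_meetingIndices, mem_filter, mem_univ, true_and]
  grind

theorem satisfies_outerClause {τ : V → Bool} :
    Satisfies τ (outerClause F S) ↔
      ∃ i ∈ meetingIndices F S, Satisfies τ {l ∈ F i | l.1 ∉ S} :=
  satisfies_biUnion

theorem satCount_contract (F : I → Finset (V × Bool)) (S : Finset V) (τ : V → Bool) :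
    satCount (contract F S) τ = #{i ∈ (meetingIndices F S)ᶜ | Satisfies τ (F i)} +
      if Satisfies τ (outerClause F S) then 1 else 0 := by
  have hnew : satCount (fun _ : Unit => outerClause F S) τ =
      if Satisfies τ (outerClause F S) then 1 else 0 := by
    simp only [satCount, card_filter, univ_unique, sum_singleton]
  rw [contract, satCount_sumElim, hnew,
    satCount_subtype F τ fun _ => mem_compl.trans mem_meetingIndices.not]

theorem filter_satisfies_compl_meetingIndices_congr {σ τ : V → Bool}
    (h : Set.EqOn σ τ (S : Set V)ᶜ) :
    {i ∈ (meetingIndices F S)ᶜ | Satisfies σ (F i)} =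
      {i ∈ (meetingIndices F S)ᶜ | Satisfies τ (F i)} := by
  refine filter_congr fun i hi => ?_
  have hagree : ∀ l ∈ F i, σ l.1 = τ l.1 := fun l hl =>
    h fun hlS => mem_compl.1 hi (mem_meetingIndices.2 ⟨l, hl, hlS⟩)
  exact ⟨fun hσ => hσ.congr fun l hl => (hagree l hl).symm, fun hτ => hτ.congr hagree⟩

theorem card_filter_satisfies_meetingIndices_le {τ : V → Bool}
    (hcard : #(meetingIndices F S) ≤ #S + 1)
    (hunsat : ¬ ∀ i ∈ meetingIndices F S, Satisfies τ {l ∈ F i | l.1 ∈ S}) :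
    #{i ∈ meetingIndices F S | Satisfies τ (F i)} ≤
      #S + if Satisfies τ (outerClause F S) then 1 else 0 := by
  split_ifs with houter
  · exact (card_filter_le _ _).trans hcard
  · push Not at hunsat
    obtain ⟨i, hi, hin⟩ := hunsat
    have hout : ¬ Satisfies τ {l ∈ F i | l.1 ∉ S} := fun h =>
      houter (satisfies_outerClause.2 ⟨i, hi, h⟩)
    have hiτ : ¬ Satisfies τ (F i) := fun h =>
      ((satisfies_iff_filter_or_filter_not (·.1 ∈ S)).1 h).elim hin hout
    exact Nat.le_of_lt_succ ((card_lt_card (filter_ssubset.2 ⟨i, hi, hiτ⟩)).trans_le hcard)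

theorem exists_injective_occurrence_ne
    (hexp : ∀ X ⊆ S, X.Nonempty → #X < #(meetingIndices F X)) (i₀ : I) :
    ∃ f : S → I, Function.Injective f ∧ ∀ v, f v ≠ i₀ ∧ ∃ b, (v.1, b) ∈ F (f v) := by
  have hall : ∀ X : Finset S, X.Nonempty →
      #X < #(X.biUnion fun v => ({i | ∃ b, (v.1, b) ∈ F i} : Finset I)) := by
    intro X hX
    have h := hexp _ (map_subtype_subset X) hX.map
    rwa [card_map, meetingIndices_eq_biUnion, map_eq_image, image_biUnion] at h
  obtain ⟨f, hf, hmem⟩ := exists_injective_forall_mem_erase_of_card_lt_card_biUnion _ hall i₀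
  exact ⟨f, hf, fun v => by simpa only [mem_erase, mem_filter_univ] using hmem v⟩

theorem exists_eqOn_compl_card_le_card_erase
    (hexp : ∀ X ⊆ S, X.Nonempty → #X < #(meetingIndices F X)) (τ : V → Bool) (i₀ : I) :
    ∃ σ : V → Bool, Set.EqOn σ τ (S : Set V)ᶜ ∧
      #S ≤ #({i ∈ meetingIndices F S | Satisfies σ (F i)}.erase i₀) := by
  obtain ⟨f, hf, hocc⟩ := exists_injective_occurrence_ne hexp i₀
  choose hne β hβ using hocc
  let σ : V → Bool := fun v => if hv : v ∈ S then β ⟨v, hv⟩ else τ v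
  have hσS : ∀ v : S, σ v = β v := fun v => dif_pos v.2
  have hmem : ∀ v, f v ∈ {i ∈ meetingIndices F S | Satisfies σ (F i)}.erase i₀ := fun v =>
    mem_erase.2 ⟨hne v, mem_filter.2
      ⟨mem_meetingIndices.2 ⟨_, hβ v, v.2⟩, _, hβ v, hσS v⟩⟩
  refine ⟨σ, fun _ hv => dif_neg hv, ?_⟩
  calc #S = #(univ.image f) := by
        rw [card_image_of_injective _ hf, card_univ, Fintype.card_coe]
    _ ≤ _ := card_le_card (image_subset_iff.2 fun v _ => hmem v)

theorem exists_eqOn_compl_le_card_filter_satisfies_meetingIndices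
    (hexp : ∀ X ⊆ S, X.Nonempty → #X < #(meetingIndices F X)) (τ : V → Bool) :
    ∃ σ : V → Bool, Set.EqOn σ τ (S : Set V)ᶜ ∧
      (#S + if Satisfies τ (outerClause F S) then 1 else 0) ≤
        #{i ∈ meetingIndices F S | Satisfies σ (F i)} := by
  split_ifs with houter
  · obtain ⟨i₀, hi₀, hτi₀⟩ := satisfies_outerClause.1 houter
    obtain ⟨σ, hστ, hσ⟩ := exists_eqOn_compl_card_le_card_erase hexp τ i₀
    have hσi₀ : Satisfies σ (F i₀) := (satisfies_iff_filter_or_filter_not (·.1 ∈ S)).2 <|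
      .inr <| hτi₀.congr fun l hl => hστ (mem_filter.1 hl).2
    refine ⟨σ, hστ, ?_⟩
    rw [← card_erase_add_one (mem_filter.2 ⟨hi₀, hσi₀⟩)]
    exact Nat.add_le_add_right hσ 1
  · rcases S.eq_empty_or_nonempty with rfl | hS
    · exact ⟨τ, fun _ _ => rfl, Nat.zero_le _⟩
    · obtain ⟨i₀, -⟩ := card_pos.1 ((Nat.zero_le _).trans_lt (hexp S Subset.rfl hS))
      obtain ⟨σ, hστ, hσ⟩ := exists_eqOn_compl_card_le_card_erase hexp τ i₀
      exact ⟨σ, hστ, hσ.trans card_erase_le⟩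

theorem stmt8_general [Fintype V] (F : I → Finset (V × Bool)) (S : Finset V)
    (hexp : ∀ X ⊆ S, X.Nonempty → #X < #(meetingIndices F X))
    (hcard : #(meetingIndices F S) ≤ #S + 1)
    (hunsat : ¬ ∃ σ : V → Bool, ∀ i ∈ meetingIndices F S, Satisfies σ {l ∈ F i | l.1 ∈ S}) :
    satMax F = satMax (contract F S) + #S := by
  apply le_antisymm
  · obtain ⟨τ, hτ⟩ := exists_satCount_eq_satMax F
    have hin := card_filter_satisfies_meetingIndices_le hcard (not_exists.1 hunsat τ)
    have hmax := satCount_le_satMax (contract F S) τ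
    rw [satCount_contract] at hmax
    rw [← hτ, satCount_eq_card_add_card_compl F τ (meetingIndices F S)]
    omega
  · obtain ⟨τ, hτ⟩ := exists_satCount_eq_satMax (contract F S)
    obtain ⟨σ, hστ, hin⟩ :=
      exists_eqOn_compl_le_card_filter_satisfies_meetingIndices hexp τ
    have hmax := satCount_le_satMax F σ
    rw [satCount_eq_card_add_card_compl F σ (meetingIndices F S),
      filter_satisfies_compl_meetingIndices_congr hστ] at hmax
    rw [← hτ, satCount_contract]
    omega

end

/-- Reduction Rule 4, unsatisfiable case: `F` is 1-expanding with every variable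
occurring, no nonempty set `U` admits an autarky with `F ∖ F_U` 1-expanding, `S` is a
nonempty set of variables with `|F_S| = |S| + 1` and `F[S]` unsatisfiable. If `c'`
consists of all literals over variables outside `S` occurring in clauses of `F_S`, and
`F'` is obtained from `F` by deleting the clauses of `F_S` and adding `c'`, then
`sat(F) = sat(F') + |S|`. -/
theorem stmt8 {V I : Type*} [Fintype V] [Fintype I] (F : I → Finset (V × Bool))
    (hne : ∀ i, (F i).Nonempty)
    (hone : ∀ i v b b', (v, b) ∈ F i → (v, b') ∈ F i → b = b')
    (hocc : ∀ v : V, ∃ i : I, ∃ b, (v, b) ∈ F i)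
    (hexp : ∀ X : Finset V, X.Nonempty →
      X.card + 1 ≤ (Finset.univ.filter fun i : I => ∃ l ∈ F i, l.1 ∈ X).card)
    (hnoaut : ¬ ∃ (U : Finset V) (π : V → Bool), U.Nonempty ∧
      (∀ i : I, (∃ l ∈ F i, l.1 ∈ U) → ∃ l ∈ F i, l.1 ∈ U ∧ π l.1 = l.2) ∧
      ∀ X : Finset V, X.Nonempty →
        (∀ x ∈ X, ∃ i : I, (¬ ∃ l ∈ F i, l.1 ∈ U) ∧ ∃ b, (x, b) ∈ F i) →
        X.card + 1 ≤ (Finset.univ.filter fun i : I =>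
          (¬ ∃ l ∈ F i, l.1 ∈ U) ∧ ∃ l ∈ F i, l.1 ∈ X).card)
    (S : Finset V) (hS : S.Nonempty)
    (hcard : (Finset.univ.filter fun i : I => ∃ l ∈ F i, l.1 ∈ S).card = S.card + 1)
    (hunsat : ¬ ∃ σ : V → Bool,
      ∀ i : I, (∃ l ∈ F i, l.1 ∈ S) → ∃ l ∈ F i, l.1 ∈ S ∧ σ l.1 = l.2)
    (c' : Finset (V × Bool))
    (hc' : c' = Finset.univ.filter fun l : V × Bool =>
      l.1 ∉ S ∧ ∃ i : I, (∃ l' ∈ F i, l'.1 ∈ S) ∧ l ∈ F i) :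
    satMax F =
      satMax (fun j : {i : I // ¬ ∃ l ∈ F i, l.1 ∈ S} ⊕ Unit =>
        match j with
        | Sum.inl i => F i.1
        | Sum.inr _ => c') + S.card := by
  obtain rfl : c' = outerClause F S := hc'.trans (outerClause_eq_filter F S).symm
  convert stmt8_general F S (fun X _ => hexp X) hcard.le
    (by simpa only [mem_meetingIndices, Satisfies, Finset.mem_filter, and_assoc] using hunsat)
    using 4 with j
  cases j <;> rfl
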